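/- Let ψ : ℝ^n → ℝ be μ-strongly convex (μ > 0) and f_1, …, f_m : ℝ^n → ℝ convex and differentiable with L_i-Lipschitz gradients; L_max = max_i L_i. Fix x ∈ ℝ^n, x* ∈ ∂ψ(x), a subset J ⊆ {1,…,m}, weights w_i > 0 with ∑_{i∈J} w_i = 1, and suppose ∑_{i∈J} w_i‖∇f_i(x)‖² > 0. Set α = ∑_{i∈J} w_i ∇f_i(x), β = ⟨α, x⟩ − ∑_{i∈J}(w_i/L_i)‖∇f_i(x)‖², H = {z : ⟨α, z⟩ ≤ β}, and L_adapt = ‖α‖² / ∑_{i∈J} w_i‖∇f_i(x)‖². Let the stepsize t be either the block adaptive extrapolated stepsize t = μ/(L_max·L_adapt), or any minimizer t = t̂ of s ↦ ψ*(x* − s·α) + s·β over ℝ (the exact projective stepsize), and define x⁺* = x* − t·α, x⁺ = ∇ψ*(x⁺*). Then for every z ∈ H: D_ψ^{x⁺*}(x⁺, z) ≤ D_ψ^{x*}(x, z) − ( μ/(2 L_max² L_adapt) )·∑_{i∈J} w_i‖∇f_i(x)‖². -/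

import Mathlib

/-!
Strong convexity with a subgradient `xs` at `x` bounds the conjugate from both sides:
`⟪p, x⟫ - ψ x ≤ ψ* p ≤ ⟪p, x⟫ - ψ x + ‖p - xs‖² / (2μ)` for all `p`
(`le_fenchel`, `fenchel_le`). Since every `p` is a subgradient somewhere
(`exists_isSubgrad`, by coercivity), this squeeze identifies `∇ψ* p` as the point where `p` is a
subgradient, so that `D_ψ^p(∇ψ* p, z) = ψ* p + ψ z - ⟪p, z⟫` (`breg_gradient_fenchel`).

Write `S = ∑ w_i ‖∇f_i(x)‖²`, `S' = ∑ (w_i / L_i) ‖∇f_i(x)‖² ≥ S / L_max` and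
`g s = ψ* (xs - s α) + s β`. For `z ∈ H` and `t ≥ 0` the new distance is at most
`g t + ψ z - ⟪xs, z⟫`, and the upper bound gives `g s ≤ g 0 - s S' + s² ‖α‖² / (2μ)`; inserting
the adaptive stepsize yields the claimed decrease. A minimizer `t` of `g` does at least as well, and
it is nonnegative because the lower bound gives `g s ≥ g 0 - s S'` with `S' > 0`.
-/


open MeasureTheory ProbabilityTheory RealInnerProductSpace
open scoped BigOperators

noncomputable section

/-- `xs` is a subgradient of `ψ` at `x`: `ψ(y) ≥ ψ(x) + ⟨xs, y - x⟩` for all `y`. -/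
def IsSubgrad {n : ℕ} (ψ : EuclideanSpace ℝ (Fin n) → ℝ) (x xs : EuclideanSpace ℝ (Fin n)) : Prop :=
  ∀ y, ψ x + ⟪xs, y - x⟫ ≤ ψ y

/-- Bregman distance `D_ψ^{xs}(x, y) = ψ(y) - ψ(x) - ⟨xs, y - x⟩`. -/
def Breg {n : ℕ} (ψ : EuclideanSpace ℝ (Fin n) → ℝ) (x xs y : EuclideanSpace ℝ (Fin n)) : ℝ :=
  ψ y - ψ x - ⟪xs, y - x⟫

/-- `ψ` is `α`-strongly convex:
`ψ(y) ≥ ψ(x) + ⟨xs, y - x⟩ + (α/2)‖y - x‖²` for all `x, y` and all subgradients `xs ∈ ∂ψ(x)`. -/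
def SubgradStrongConvex {n : ℕ} (ψ : EuclideanSpace ℝ (Fin n) → ℝ) (α : ℝ) : Prop :=
  ∀ x y xs, IsSubgrad ψ x xs → ψ x + ⟪xs, y - x⟫ + α / 2 * ‖y - x‖ ^ 2 ≤ ψ y

/-- Fenchel conjugate `ψ*(p) = sup_z (⟨p, z⟩ - ψ(z))`. -/
def fenchel {n : ℕ} (ψ : EuclideanSpace ℝ (Fin n) → ℝ) (p : EuclideanSpace ℝ (Fin n)) : ℝ :=
  ⨆ z, (⟪p, z⟫ - ψ z)

/-- `xhat` is the Bregman projection of `x` onto `C` w.r.t. `ψ` and the subgradient `xs`: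
it belongs to `C` and minimizes `y ↦ D_ψ^{xs}(x, y)` over `C`. -/
def IsBregProj {n : ℕ} (ψ : EuclideanSpace ℝ (Fin n) → ℝ) (x xs : EuclideanSpace ℝ (Fin n))
    (C : Set (EuclideanSpace ℝ (Fin n))) (xhat : EuclideanSpace ℝ (Fin n)) : Prop :=
  xhat ∈ C ∧ ∀ y ∈ C, Breg ψ x xs xhat ≤ Breg ψ x xs y

/-- The proximity objective `F(x) = (1/m) ∑_{i=1}^m f_i(x)`. -/
def Fobj {n m : ℕ} (f : Fin m → EuclideanSpace ℝ (Fin n) → ℝ) (v : EuclideanSpace ℝ (Fin n)) : ℝ :=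
  (m : ℝ)⁻¹ * ∑ i, f i v

/-- The set of (global) minimizers of `F = (1/m) ∑ f_i`. -/
def ArgminSet {n m : ℕ} (f : Fin m → EuclideanSpace ℝ (Fin n) → ℝ) :
    Set (EuclideanSpace ℝ (Fin n)) :=
  {z | ∀ y, Fobj f z ≤ Fobj f y}

/-- Squared Bregman distance from `z` (with subgradient `zs`) to a set `X`:
`inf_{w ∈ X} D_ψ^{zs}(z, w)`. -/
def distSq {n : ℕ} (ψ : EuclideanSpace ℝ (Fin n) → ℝ) (z zs : EuclideanSpace ℝ (Fin n))
    (X : Set (EuclideanSpace ℝ (Fin n))) : ℝ :=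
  ⨅ w : X, Breg ψ z zs (w : EuclideanSpace ℝ (Fin n))

section FenchelConjugate

variable {n : ℕ} {ψ : EuclideanSpace ℝ (Fin n) → ℝ} {μ : ℝ}

/-- The pointwise estimate behind `fenchel_le`: the linear term is absorbed by the quadratic one. -/
lemma inner_sub_le (hμ : 0 < μ) (hsc : SubgradStrongConvex ψ μ)
    {x xs : EuclideanSpace ℝ (Fin n)} (hxs : IsSubgrad ψ x xs) (p y : EuclideanSpace ℝ (Fin n)) :
    ⟪p, y⟫ - ψ y ≤ ⟪p, x⟫ - ψ x + ‖p - xs‖ ^ 2 / (2 * μ) := by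
  have h := hsc x y xs hxs
  have h1 : ⟪p - xs, y - x⟫ ≤ ‖p - xs‖ * ‖y - x‖ := real_inner_le_norm _ _
  have h2 : ‖p - xs‖ * ‖y - x‖ ≤ ‖p - xs‖ ^ 2 / (2 * μ) + μ / 2 * ‖y - x‖ ^ 2 := by
    have h3 : ‖p - xs‖ ^ 2 / (2 * μ) + μ / 2 * ‖y - x‖ ^ 2 - ‖p - xs‖ * ‖y - x‖
        = (‖p - xs‖ - μ * ‖y - x‖) ^ 2 / (2 * μ) := by
      field_simp
      ring
    have h4 : 0 ≤ (‖p - xs‖ - μ * ‖y - x‖) ^ 2 / (2 * μ) := by positivity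
    linarith
  simp only [inner_sub_left, inner_sub_right] at h h1
  linarith

lemma fenchel_le (hμ : 0 < μ) (hsc : SubgradStrongConvex ψ μ)
    {x xs : EuclideanSpace ℝ (Fin n)} (hxs : IsSubgrad ψ x xs) (p : EuclideanSpace ℝ (Fin n)) :
    fenchel ψ p ≤ ⟪p, x⟫ - ψ x + ‖p - xs‖ ^ 2 / (2 * μ) :=
  ciSup_le fun y => inner_sub_le hμ hsc hxs p y

/-- The existence of some subgradient makes the supremum defining `ψ* p` finite. -/
lemma le_fenchel (hμ : 0 < μ) (hsc : SubgradStrongConvex ψ μ)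
    {x xs : EuclideanSpace ℝ (Fin n)} (hxs : IsSubgrad ψ x xs) (p y : EuclideanSpace ℝ (Fin n)) :
    ⟪p, y⟫ - ψ y ≤ fenchel ψ p :=
  le_ciSup (f := fun z => ⟪p, z⟫ - ψ z)
    ⟨_, Set.forall_mem_range.2 fun y => inner_sub_le hμ hsc hxs p y⟩ y

lemma fenchel_eq (hμ : 0 < μ) (hsc : SubgradStrongConvex ψ μ)
    {x xs : EuclideanSpace ℝ (Fin n)} (hxs : IsSubgrad ψ x xs) :
    fenchel ψ xs = ⟪xs, x⟫ - ψ x := by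
  apply le_antisymm
  · simpa using fenchel_le hμ hsc hxs xs
  · exact le_fenchel hμ hsc hxs xs x

/-- The squeeze between `le_fenchel` and `fenchel_le` leaves an `O(‖p - xs‖²)` remainder. -/
lemma hasGradientAt_fenchel (hμ : 0 < μ) (hsc : SubgradStrongConvex ψ μ)
    {x xs : EuclideanSpace ℝ (Fin n)} (hxs : IsSubgrad ψ x xs) :
    HasGradientAt (fenchel ψ) x xs := by
  rw [hasGradientAt_iff_isLittleO]
  have hO : (fun p => fenchel ψ p - fenchel ψ xs - ⟪x, p - xs⟫) =O[nhds xs]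
      fun p => ‖p - xs‖ ^ 2 := by
    refine Asymptotics.IsBigO.of_bound (1 / (2 * μ)) (Filter.Eventually.of_forall fun p => ?_)
    have h1 := fenchel_le hμ hsc hxs p
    have h2 := le_fenchel hμ hsc hxs p x
    have h3 := fenchel_eq hμ hsc hxs
    have h4 : ⟪x, p - xs⟫ = ⟪p, x⟫ - ⟪xs, x⟫ := by
      rw [real_inner_comm, inner_sub_left]
    have h5 : 1 / (2 * μ) * ‖p - xs‖ ^ 2 = ‖p - xs‖ ^ 2 / (2 * μ) := by ring
    rw [Real.norm_of_nonneg (by linarith), Real.norm_of_nonneg (by positivity)]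
    linarith
  refine hO.trans_isLittleO ?_
  exact Asymptotics.isLittleO_pow_sub_sub xs one_lt_two

/-- Strong convexity makes `ψ - ⟪p, ·⟫` coercive, and its minimizer has `p` as a subgradient. -/
lemma exists_isSubgrad (hμ : 0 < μ) (hconv : ConvexOn ℝ Set.univ ψ)
    (hsc : SubgradStrongConvex ψ μ) {x xs : EuclideanSpace ℝ (Fin n)} (hxs : IsSubgrad ψ x xs)
    (p : EuclideanSpace ℝ (Fin n)) : ∃ y, IsSubgrad ψ y p := by
  have hcont : Continuous ψ :=
    continuousOn_univ.1 (hconv.continuousOn isOpen_univ)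
  have hnorm : Filter.Tendsto (fun y : EuclideanSpace ℝ (Fin n) => ‖y - x‖)
      (Filter.cocompact _) Filter.atTop :=
    tendsto_norm_cocompact_atTop.comp (Homeomorph.subRight x).isClosedEmbedding.tendsto_cocompact
  have hquad : Filter.Tendsto (fun r : ℝ => r * (μ / 2 * r - ‖p - xs‖) + (ψ x - ⟪p, x⟫))
      Filter.atTop Filter.atTop := by
    refine Filter.tendsto_atTop_add_const_right _ _ (Filter.tendsto_id.atTop_mul_atTop₀ ?_)
    exact Filter.tendsto_atTop_add_const_right _ _
      (Filter.tendsto_id.const_mul_atTop (by positivity))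
  have hcoer : Filter.Tendsto (fun y => ψ y - ⟪p, y⟫) (Filter.cocompact _) Filter.atTop := by
    refine Filter.tendsto_atTop_mono (fun y => ?_) (hquad.comp hnorm)
    have h := hsc x y xs hxs
    have h1 : ⟪p - xs, y - x⟫ ≤ ‖p - xs‖ * ‖y - x‖ := real_inner_le_norm _ _
    simp only [inner_sub_left, inner_sub_right] at h h1
    simp only [Function.comp_apply]
    nlinarith
  obtain ⟨y, hy⟩ := (show Continuous fun y => ψ y - ⟪p, y⟫ by fun_prop).exists_forall_le hcoer
  refine ⟨y, fun z => ?_⟩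
  have := hy z
  rw [inner_sub_right]
  linarith

lemma breg_gradient_fenchel (hμ : 0 < μ) (hconv : ConvexOn ℝ Set.univ ψ)
    (hsc : SubgradStrongConvex ψ μ) {x xs : EuclideanSpace ℝ (Fin n)} (hxs : IsSubgrad ψ x xs)
    (p z : EuclideanSpace ℝ (Fin n)) :
    Breg ψ (gradient (fenchel ψ) p) p z = fenchel ψ p + ψ z - ⟪p, z⟫ := by
  obtain ⟨y, hy⟩ := exists_isSubgrad hμ hconv hsc hxs p
  rw [(hasGradientAt_fenchel hμ hsc hy).gradient, fenchel_eq hμ hsc hy, Breg, inner_sub_right]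
  ring

/-- The decrease for abstract halfspace data `a`, `S'`: here `S` is any positive lower bound for
`Lmax * S'`. -/
lemma breg_descent (hμ : 0 < μ) (hconv : ConvexOn ℝ Set.univ ψ)
    (hsc : SubgradStrongConvex ψ μ) {x xs : EuclideanSpace ℝ (Fin n)} (hxs : IsSubgrad ψ x xs)
    (a z : EuclideanSpace ℝ (Fin n)) {S S' Lmax t : ℝ} (hS : 0 < S) (hLmax : 0 < Lmax)
    (hSS' : S / Lmax ≤ S')
    (hstep : t = μ / (Lmax * (‖a‖ ^ 2 / S)) ∨
      ∀ s : ℝ, fenchel ψ (xs - t • a) + t * (⟪a, x⟫ - S') ≤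
        fenchel ψ (xs - s • a) + s * (⟪a, x⟫ - S'))
    (hz : ⟪a, z⟫ ≤ ⟪a, x⟫ - S') :
    Breg ψ (gradient (fenchel ψ) (xs - t • a)) (xs - t • a) z ≤
      Breg ψ x xs z - μ / (2 * Lmax ^ 2 * (‖a‖ ^ 2 / S)) * S := by
  have hS' : 0 < S' := lt_of_lt_of_le (by positivity) hSS'
  -- If `a = 0`, the halfspace is empty.
  have ha : a ≠ 0 := by
    rintro rfl
    simp only [inner_zero_left] at hz
    linarith
  have hna : 0 < ‖a‖ := norm_pos_iff.2 ha
  have heq := fenchel_eq hμ hsc hxs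
  have hup : ∀ s : ℝ, fenchel ψ (xs - s • a) + s * (⟪a, x⟫ - S') ≤
      fenchel ψ xs - s * S' + s ^ 2 * ‖a‖ ^ 2 / (2 * μ) := by
    intro s
    have h := fenchel_le hμ hsc hxs (xs - s • a)
    rw [sub_sub_cancel_left, norm_neg, norm_smul, mul_pow, Real.norm_eq_abs, sq_abs,
      inner_sub_left, real_inner_smul_left] at h
    linarith
  have hlow : ∀ s : ℝ, fenchel ψ xs - s * S' ≤
      fenchel ψ (xs - s • a) + s * (⟪a, x⟫ - S') := by
    intro s
    have h := le_fenchel hμ hsc hxs (xs - s • a) x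
    rw [inner_sub_left, real_inner_smul_left] at h
    linarith
  set τ : ℝ := μ / (Lmax * (‖a‖ ^ 2 / S)) with hτ
  have hτpos : 0 < τ := by positivity
  have hgτ : fenchel ψ (xs - τ • a) + τ * (⟪a, x⟫ - S') ≤
      fenchel ψ xs - μ / (2 * Lmax ^ 2 * (‖a‖ ^ 2 / S)) * S := by
    have h1 := hup τ
    have h2 : τ * (S / Lmax) ≤ τ * S' := mul_le_mul_of_nonneg_left hSS' hτpos.le
    have h3 : τ * (S / Lmax) - τ ^ 2 * ‖a‖ ^ 2 / (2 * μ) =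
        μ / (2 * Lmax ^ 2 * (‖a‖ ^ 2 / S)) * S := by
      rw [hτ]
      field_simp
      ring
    linarith
  have key : 0 ≤ t ∧ fenchel ψ (xs - t • a) + t * (⟪a, x⟫ - S') ≤
      fenchel ψ xs - μ / (2 * Lmax ^ 2 * (‖a‖ ^ 2 / S)) * S := by
    rcases hstep with rfl | hmin
    · exact ⟨hτpos.le, hgτ⟩
    · refine ⟨?_, (hmin τ).trans hgτ⟩
      by_contra! ht
      have h1 := hmin 0
      have h2 := hlow t
      rw [zero_smul, sub_zero, zero_mul, add_zero] at h1
      nlinarith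
  obtain ⟨ht, hgt⟩ := key
  have h1 : t * ⟪a, z⟫ ≤ t * (⟪a, x⟫ - S') := mul_le_mul_of_nonneg_left hz ht
  rw [breg_gradient_fenchel hμ hconv hsc hxs, Breg, inner_sub_left, real_inner_smul_left,
    inner_sub_right]
  linarith

end FenchelConjugate

/-- Basic descent lemma, part (b): with the block adaptive extrapolated
stepsize `t = μ/(L_max·L_adapt)`, or any exact projective stepsize (a minimizer of
`s ↦ ψ*(xs − s·α) + s·β`), for every `z` in the halfspace `H`:
`D_ψ^{x⁺*}(x⁺, z) ≤ D_ψ^{xs}(x, z) − (μ/(2 L_max² L_adapt))·∑ w_i‖∇f_i(x)‖²`. -/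
theorem stmt9 {n m : ℕ} (ψ : EuclideanSpace ℝ (Fin n) → ℝ) (μ : ℝ) (hμ : 0 < μ)
    (hψconv : ConvexOn ℝ Set.univ ψ) (hsc : SubgradStrongConvex ψ μ)
    (f : Fin m → EuclideanSpace ℝ (Fin n) → ℝ)
    (hfconv : ∀ i, ConvexOn ℝ Set.univ (f i))
    (f' : Fin m → EuclideanSpace ℝ (Fin n) → EuclideanSpace ℝ (Fin n))
    (hdiff : ∀ i z, HasGradientAt (f i) (f' i z) z)
    (L : Fin m → ℝ) (hL : ∀ i, 0 < L i)
    (hlip : ∀ i z w, ‖f' i z - f' i w‖ ≤ L i * ‖z - w‖)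
    (Lmax : ℝ) (hm : 0 < m) (hLmax : Lmax = ⨆ i, L i)
    (x xs : EuclideanSpace ℝ (Fin n)) (hxs : IsSubgrad ψ x xs)
    (J : Finset (Fin m)) (w : Fin m → ℝ)
    (hw : ∀ i ∈ J, 0 < w i) (hwsum : ∑ i ∈ J, w i = 1)
    (hpos : 0 < ∑ i ∈ J, w i * ‖f' i x‖ ^ 2)
    (t : ℝ)
    (hstep :
      t = μ / (Lmax * (‖∑ i ∈ J, w i • f' i x‖ ^ 2 / ∑ i ∈ J, w i * ‖f' i x‖ ^ 2)) ∨
      ∀ s : ℝ,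
        fenchel ψ (xs - t • ∑ i ∈ J, w i • f' i x) +
          t * (⟪∑ i ∈ J, w i • f' i x, x⟫ - ∑ i ∈ J, w i / L i * ‖f' i x‖ ^ 2) ≤
        fenchel ψ (xs - s • ∑ i ∈ J, w i • f' i x) +
          s * (⟪∑ i ∈ J, w i • f' i x, x⟫ - ∑ i ∈ J, w i / L i * ‖f' i x‖ ^ 2)) :
    ∀ z, (⟪∑ i ∈ J, w i • f' i x, z⟫ ≤
        ⟪∑ i ∈ J, w i • f' i x, x⟫ - ∑ i ∈ J, w i / L i * ‖f' i x‖ ^ 2) →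
      Breg ψ (gradient (fenchel ψ) (xs - t • ∑ i ∈ J, w i • f' i x))
          (xs - t • ∑ i ∈ J, w i • f' i x) z ≤
        Breg ψ x xs z -
          μ / (2 * Lmax ^ 2 *
            (‖∑ i ∈ J, w i • f' i x‖ ^ 2 / ∑ i ∈ J, w i * ‖f' i x‖ ^ 2)) *
          ∑ i ∈ J, w i * ‖f' i x‖ ^ 2 := by
  intro z hz
  have hle : ∀ i, L i ≤ Lmax := fun i =>
    hLmax ▸ le_ciSup (f := L) (Set.finite_range L).bddAbove i
  have hLpos : 0 < Lmax := (hL ⟨0, hm⟩).trans_le (hle _)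
  refine breg_descent hμ hψconv hsc hxs _ z hpos hLpos ?_ hstep hz
  rw [Finset.sum_div]
  refine Finset.sum_le_sum fun i hi => ?_
  have hwi := hw i hi
  have hLi := hL i
  rw [div_mul_eq_mul_div]
  exact div_le_div_of_nonneg_left (by positivity) hLi (hle i)
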